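/- arXiv:2601.15318 — 2 statements merged into one kernel-verified Lean document; each statement's English description precedes it below -/
import Mathlib

section
/- Let v be a TU-game on N = {1,…,n}, let γ_S > 0 be weights for all nonempty proper subsets S of N, and let v* be a closest balanced game to v. If x ∈ C(v*) and S is a nonempty proper subset of N with x(S) ≥ v(S), then v*(S) = v(S). -/
open Finset

/-- Sum of an allocation `x` over a coalition `S`: `x(S) = ∑_{i ∈ S} x_i`. -/
def coalSum {n : ℕ} (x : Fin n → ℝ) (S : Finset (Fin n)) : ℝ := ∑ i ∈ S, x i

/-- `x` belongs to the core of the TU-game `v`. -/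
def inCore {n : ℕ} (v : Finset (Fin n) → ℝ) (x : Fin n → ℝ) : Prop :=
  coalSum x Finset.univ = v Finset.univ ∧ ∀ S : Finset (Fin n), v S ≤ coalSum x S

/-- A game is balanced iff its core is nonempty. -/
def IsBalancedGame {n : ℕ} (v : Finset (Fin n) → ℝ) : Prop := ∃ x, inCore v x

/-- The nonempty proper subsets of `N = {1,…,n}`. -/
def propSubsets (n : ℕ) : Finset (Finset (Fin n)) :=
  Finset.univ.filter (fun S => S ≠ ∅ ∧ S ≠ Finset.univ)

/-- Weighted squared distance `∑_{∅≠S⊊N} γ_S (v(S) − w(S))²` between games. -/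
def dist2 {n : ℕ} (γ v w : Finset (Fin n) → ℝ) : ℝ :=
  ∑ S ∈ propSubsets n, γ S * (v S - w S) ^ 2

/-- `w` is a closest balanced game to `v` with respect to the weights `γ`:
`w` is a balanced game with `w(N) = v(N)` minimizing the weighted squared distance
to `v` among all balanced games `u` with `u(N) = v(N)`. -/
def IsClosestBalanced {n : ℕ} (γ v w : Finset (Fin n) → ℝ) : Prop :=
  w ∅ = 0 ∧ IsBalancedGame w ∧ w Finset.univ = v Finset.univ ∧
    ∀ u : Finset (Fin n) → ℝ, u ∅ = 0 → IsBalancedGame u →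
      u Finset.univ = v Finset.univ → dist2 γ v w ≤ dist2 γ v u

/-! Overwriting `v*(S)` by `v(S)` keeps `x` in the core, since `x(S) ≥ v(S)` and `S ≠ N`, so the
new game is still an admissible competitor. It is nearer to `v` by exactly `γ_S (v(S) - v*(S))²`,
which must therefore vanish. -/

section

open Function

variable {n : ℕ} {v w γ : Finset (Fin n) → ℝ} {x : Fin n → ℝ} {S : Finset (Fin n)}

theorem mem_propSubsets : S ∈ propSubsets n ↔ S ≠ ∅ ∧ S ≠ univ := by
  simp only [propSubsets, mem_filter_univ]

theorem inCore.update {a : ℝ} (hx : inCore w x) (hS : S ≠ univ) (ha : a ≤ coalSum x S) :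
    inCore (update w S a) x := by
  refine ⟨by rw [update_of_ne hS.symm, hx.1], fun T => ?_⟩
  obtain rfl | hT := eq_or_ne T S
  · rwa [update_self]
  · rw [update_of_ne hT]
    exact hx.2 T

theorem dist2_update (γ v w : Finset (Fin n) → ℝ) (hS : S ∈ propSubsets n) (a : ℝ) :
    dist2 γ v (update w S a) =
      dist2 γ v w - γ S * (v S - w S) ^ 2 + γ S * (v S - a) ^ 2 := by
  have hrest : ∑ T ∈ (propSubsets n).erase S, γ T * (v T - update w S a T) ^ 2 =
      ∑ T ∈ (propSubsets n).erase S, γ T * (v T - w T) ^ 2 :=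
    sum_congr rfl fun T hT => by rw [update_of_ne (ne_of_mem_erase hT)]
  rw [dist2, dist2, ← add_sum_erase _ _ hS, hrest, update_self, ← add_sum_erase _ _ hS]
  ring

theorem closest_balanced_eq_of_core_ge_general (hclosest : IsClosestBalanced γ v w)
    (hx : inCore w x) (hS : S ∈ propSubsets n) (hγS : 0 < γ S) (hxS : v S ≤ coalSum x S) :
    w S = v S := by
  obtain ⟨hw_empty, -, hw_univ, hmin⟩ := hclosest
  obtain ⟨hS_empty, hS_univ⟩ := mem_propSubsets.mp hS
  have hle : dist2 γ v w ≤ dist2 γ v (update w S (v S)) :=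
    hmin _ (by rw [update_of_ne hS_empty.symm, hw_empty]) ⟨x, hx.update hS_univ hxS⟩
      (by rw [update_of_ne hS_univ.symm, hw_univ])
  have hgap : γ S * (v S - w S) ^ 2 ≤ 0 := by
    linarith [dist2_update γ v w hS (v S)]
  have hdiff : v S - w S = 0 :=
    (sq_nonpos_iff _).mp (nonpos_of_mul_nonpos_right hgap hγS)
  exact (sub_eq_zero.mp hdiff).symm

end

/-- Lemma 2 (Lemma `closest2`): if `x ∈ C(v*)` and `x(S) ≥ v(S)` for a nonempty
proper subset `S` of `N`, then `v*(S) = v(S)`. -/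
theorem closest_balanced_eq_of_core_ge (n : ℕ) (v vstar γ : Finset (Fin n) → ℝ)
    (hv0 : v ∅ = 0)
    (hγ : ∀ S ∈ propSubsets n, 0 < γ S)
    (hclosest : IsClosestBalanced γ v vstar)
    (x : Fin n → ℝ) (hx : inCore vstar x)
    (S : Finset (Fin n)) (hS : S ∈ propSubsets n)
    (hxS : v S ≤ coalSum x S) :
    vstar S = v S :=
  closest_balanced_eq_of_core_ge_general hclosest hx hS (hγ S hS) hxS
end

section
/- For every n ≥ 2, the number B_n^n of minimal balanced collections on N = {1,…,n} consisting of exactly n subsets satisfies n! · B_n^n = M_n, where M_n is the number of n×n matrices with entries in {0,1} that are invertible over ℝ and whose unique solution x of Mx = 𝟙 is componentwise strictly positive. -/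
open Finset

/-- `lam` is a system of balancing weights for the collection `B`:
all weights are positive and `∑_{S∈B, S∋i} λ_S = 1` for every player `i`. -/
def IsBalancingWeights {n : ℕ} (B : Finset (Finset (Fin n)))
    (lam : Finset (Fin n) → ℝ) : Prop :=
  (∀ S ∈ B, 0 < lam S) ∧ ∀ i : Fin n, ∑ S ∈ B.filter (fun S => i ∈ S), lam S = 1

/-- `B` is a balanced collection: a family of nonempty subsets of `N` admitting a
system of balancing weights. -/
def IsBalancedCollection {n : ℕ} (B : Finset (Finset (Fin n))) : Prop :=
  (∀ S ∈ B, S ≠ ∅) ∧ ∃ lam, IsBalancingWeights B lam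

/-- `B` is a minimal balanced collection: balanced and no proper subfamily is balanced. -/
def IsMinimalBalancedCollection {n : ℕ} (B : Finset (Finset (Fin n))) : Prop :=
  IsBalancedCollection B ∧ ∀ B' ⊂ B, ¬ IsBalancedCollection B'

open Matrix

/-- `B_n^n`: the number of minimal balanced collections on `N = {1,…,n}` (other
than `{N}`) consisting of exactly `n` subsets. -/
noncomputable def Bnn (n : ℕ) : ℕ :=
  Nat.card {B : Finset (Finset (Fin n)) //
    IsMinimalBalancedCollection B ∧ B ≠ {Finset.univ} ∧ B.card = n}

/-- `M_n`: the number of `n×n` matrices with entries in `{0,1}` that are invertible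
over `ℝ` and whose unique solution `x = M⁻¹ 𝟙` of `M x = 𝟙` is componentwise
strictly positive. -/
noncomputable def Mcard (n : ℕ) : ℕ :=
  Nat.card {M : Matrix (Fin n) (Fin n) ℝ //
    (∀ i j, M i j = 0 ∨ M i j = 1) ∧ IsUnit M ∧
      ∀ j, 0 < (M⁻¹ *ᵥ (1 : Fin n → ℝ)) j}

/-!
A family `S` of sets is encoded by its incidence matrix `A`, so that balancing weights are positive
solutions of `A x = 𝟙`. A family of nonempty sets with such a solution `x` is minimal iff `A` has
trivial kernel: by uniqueness no solution can vanish at an index, whereas a nonzero kernel vector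
can be added to `x` with a suitable coefficient until a coordinate first vanishes, which exhibits a
proper balanced subfamily. Each collection of `m` sets has `m!` enumerations, and an enumeration
of a minimal balanced collection is the same thing as a `0/1` matrix with trivial kernel for which
`A x = 𝟙` has a positive solution.
-/

section LinearAlgebra

variable {K ι : Type*} [Field K] [LinearOrder K]

lemma exists_add_smul_nonneg_and_apply_eq_zero [IsStrictOrderedRing K] [Finite ι] {x v : ι → K}
    (hx : ∀ i, 0 < x i) (hv : v ≠ 0) : ∃ t : K, 0 ≤ x + t • v ∧ ∃ i, (x + t • v) i = 0 := by
  obtain ⟨j, hj⟩ := Function.ne_iff.1 hv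
  have : Nonempty ι := ⟨j⟩
  -- The smallest multiple of `v` cancelling a coordinate of `x` does so where `|v i| / x i` is
  -- maximal; taking absolute values avoids a case distinction on the sign of `v`.
  obtain ⟨k, hk⟩ := Finite.exists_max fun i => |v i| / x i
  have hvk : v k ≠ 0 := by
    have : 0 < |v k| / x k := (div_pos (abs_pos.2 hj) (hx j)).trans_le (hk j)
    intro h
    simp [h] at this
  refine ⟨-(x k / v k), fun i => ?_, k, by simp [hvk]⟩
  have hle : |x k / v k * v i| ≤ x i := by
    rw [abs_mul, abs_div, abs_of_pos (hx k), div_mul_eq_mul_div, div_le_iff₀ (abs_pos.2 hvk)]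
    have := (div_le_div_iff₀ (hx i) (hx k)).1 (hk i)
    linarith
  simpa using (le_abs_self _).trans hle

lemma isUnit_and_inv_mulVec_pos_iff [Fintype ι] [DecidableEq ι] {A : Matrix ι ι K} {b : ι → K} :
    (IsUnit A ∧ ∀ j, 0 < (A⁻¹ *ᵥ b) j) ↔
      Function.Injective A.mulVec ∧ ∃ x : ι → K, (∀ j, 0 < x j) ∧ A *ᵥ x = b := by
  rw [mulVec_injective_iff_isUnit]
  refine and_congr_right fun hA => ?_
  have hdet : IsUnit A.det := (isUnit_iff_isUnit_det A).1 hA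
  constructor
  · intro hpos
    exact ⟨A⁻¹ *ᵥ b, hpos, by rw [mulVec_mulVec, mul_nonsing_inv A hdet, one_mulVec]⟩
  · rintro ⟨x, hx, rfl⟩
    rwa [mulVec_mulVec, nonsing_inv_mul A hdet, one_mulVec]

end LinearAlgebra

section IncidenceMatrix

variable {α ι : Type*} [DecidableEq α]

/-- The `0/1` incidence matrix of a family `S` of finite sets: rows are indexed by elements,
and column `j` is the indicator vector of `S j`. -/
def incidenceMatrix (R : Type*) [Zero R] [One R] (S : ι → Finset α) : Matrix α ι R :=
  Matrix.of fun i j => if i ∈ S j then 1 else 0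

variable {R : Type*}

@[simp]
lemma incidenceMatrix_apply [Zero R] [One R] (S : ι → Finset α) (i : α) (j : ι) :
    incidenceMatrix R S i j = if i ∈ S j then 1 else 0 :=
  rfl

lemma incidenceMatrix_injective [Zero R] [One R] [NeZero (1 : R)] :
    Function.Injective (incidenceMatrix R : (ι → Finset α) → Matrix α ι R) := by
  intro S T h
  ext j i
  have hij : (if i ∈ S j then (1 : R) else 0) = if i ∈ T j then 1 else 0 := congr_fun₂ h i j
  by_cases hS : i ∈ S j <;> by_cases hT : i ∈ T j <;> simp_all

lemma exists_incidenceMatrix_eq_iff [Zero R] [One R] [Finite α] {A : Matrix α ι R} :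
    (∃ S : ι → Finset α, incidenceMatrix R S = A) ↔ ∀ i j, A i j = 0 ∨ A i j = 1 := by
  classical
  have := Fintype.ofFinite α
  constructor
  · rintro ⟨S, rfl⟩ i j
    by_cases h : i ∈ S j <;> simp [h]
  · intro h
    refine ⟨fun j => {i | A i j = 1}, ?_⟩
    ext i j
    rcases h i j with h | h <;> simp [h, eq_comm]

variable [Fintype ι] [Semiring R]

lemma incidenceMatrix_mulVec_apply (S : ι → Finset α) (x : ι → R) (i : α) :
    (incidenceMatrix R S *ᵥ x) i = ∑ j with i ∈ S j, x j := by
  simp [mulVec, dotProduct, sum_filter]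

variable [Nontrivial R] {S : ι → Finset α}
  (hS : Function.Injective (incidenceMatrix R S).mulVec)

include hS

lemma injective_of_injective_incidenceMatrix_mulVec : Function.Injective S := by
  classical
  intro j k hjk
  have h : incidenceMatrix R S *ᵥ Pi.single j 1 = incidenceMatrix R S *ᵥ Pi.single k 1 := by
    ext i
    simp [hjk]
  simpa [Pi.single_apply] using congr_fun (hS h) j

lemma nonempty_of_injective_incidenceMatrix_mulVec (j : ι) : (S j).Nonempty := by
  classical
  by_contra hj
  have h : incidenceMatrix R S *ᵥ Pi.single j 1 = incidenceMatrix R S *ᵥ 0 := by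
    ext i
    simp [not_nonempty_iff_eq_empty.1 hj]
  simpa using congr_fun (hS h) j

end IncidenceMatrix

section BalancedCollection

variable {n : ℕ} {ι : Type*} [Fintype ι] {S : ι ↪ Finset (Fin n)}

lemma isBalancingWeights_map_iff {J : Finset ι} {lam : Finset (Fin n) → ℝ} :
    IsBalancingWeights (J.map S) lam ↔
      (∀ j ∈ J, 0 < lam (S j)) ∧
        incidenceMatrix ℝ S *ᵥ (J : Set ι).indicator (lam ∘ S) = 1 := by
  classical
  have hsum (i : Fin n) : ∑ T ∈ J.map S with i ∈ T, lam T =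
      (incidenceMatrix ℝ S *ᵥ (J : Set ι).indicator (lam ∘ S)) i := by
    simp only [incidenceMatrix_mulVec_apply, Set.indicator_apply, mem_coe, sum_ite_mem,
      filter_inter, univ_inter, filter_map, sum_map, Function.comp_def]
  simp only [IsBalancingWeights, forall_mem_map, hsum, funext_iff, Pi.one_apply]

lemma isBalancedCollection_map_iff {J : Finset ι} :
    IsBalancedCollection (J.map S) ↔
      (∀ j ∈ J, (S j).Nonempty) ∧ ∃ x : ι → ℝ, (∀ j ∈ J, 0 < x j) ∧ (∀ j ∉ J, x j = 0) ∧
        incidenceMatrix ℝ S *ᵥ x = 1 := by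
  simp only [IsBalancedCollection, forall_mem_map, ← nonempty_iff_ne_empty,
    isBalancingWeights_map_iff]
  refine and_congr_right fun _ => ?_
  constructor
  · rintro ⟨lam, hpos, hsum⟩
    refine ⟨_, fun j hj => ?_, fun j hj => ?_, hsum⟩
    · simpa [hj] using hpos j hj
    · simp [hj]
  · rintro ⟨x, hpos, hzero, hx⟩
    have hext : Function.extend S x 0 ∘ S = x := Function.extend_comp S.injective x 0
    refine ⟨Function.extend S x 0, fun j hj => ?_, ?_⟩
    · simpa [S.injective.extend_apply] using hpos j hj
    · rwa [hext, Set.indicator_eq_self.2 fun j hj => by_contra fun h => hj (hzero j h)]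

lemma IsMinimalBalancedCollection.injective_incidenceMatrix_mulVec
    (h : IsMinimalBalancedCollection (univ.map S)) :
    Function.Injective (incidenceMatrix ℝ S).mulVec := by
  obtain ⟨hbal, hmin⟩ := h
  obtain ⟨hne, x, hpos, -, hx⟩ := isBalancedCollection_map_iff.1 hbal
  simp only [mem_univ, forall_const] at hne hpos
  rw [← coe_mulVecLin, ← LinearMap.ker_eq_bot, ker_mulVecLin_eq_bot_iff]
  intro v hv
  by_contra hv0
  obtain ⟨t, hnonneg, k, hk⟩ := exists_add_smul_nonneg_and_apply_eq_zero hpos hv0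
  set y := x + t • v
  have hy : incidenceMatrix ℝ S *ᵥ y = 1 := by
    rw [mulVec_add, mulVec_smul, hv, smul_zero, add_zero, hx]
  have hsupp : ({j | y j ≠ 0} : Finset ι) ⊂ univ := filter_ssubset.2 ⟨k, by simpa using hk⟩
  refine hmin _ (map_ssubset_map.2 hsupp) (isBalancedCollection_map_iff.2
    ⟨fun j _ => hne j, y, fun j hj => ?_, fun j hj => ?_, hy⟩)
  · exact (hnonneg j).lt_of_ne' (by simpa using hj)
  · simpa using hj

lemma isMinimalBalancedCollection_map_univ_iff :
    IsMinimalBalancedCollection (univ.map S) ↔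
      Function.Injective (incidenceMatrix ℝ S).mulVec ∧
        ∃ x : ι → ℝ, (∀ j, 0 < x j) ∧ incidenceMatrix ℝ S *ᵥ x = 1 := by
  constructor
  · intro h
    obtain ⟨-, x, hpos, -, hx⟩ := isBalancedCollection_map_iff.1 h.1
    exact ⟨h.injective_incidenceMatrix_mulVec, x, fun j => hpos j (mem_univ j), hx⟩
  · rintro ⟨hinj, x, hpos, hx⟩
    have hne := nonempty_of_injective_incidenceMatrix_mulVec hinj
    refine ⟨isBalancedCollection_map_iff.2 ⟨fun j _ => hne j, x, by simpa using hpos, by simp, hx⟩,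
      fun B' hB' hbal => ?_⟩
    obtain ⟨J, -, rfl⟩ := subset_map_iff.1 hB'.subset
    obtain ⟨j, -, hj⟩ := exists_of_ssubset (map_ssubset_map.1 hB')
    obtain ⟨-, y, -, hzero, hy⟩ := isBalancedCollection_map_iff.1 hbal
    have hxy : x = y := hinj (hx.trans hy.symm)
    exact (hpos j).ne' (hxy ▸ hzero j hj)

end BalancedCollection

section Counting

variable {ι β : Type*} [Fintype ι]

lemma map_univ_toEmbedding_trans_subtype {s : Finset β} (e : ι ≃ s) :
    univ.map (e.toEmbedding.trans (.subtype (· ∈ s))) = s := by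
  rw [← Finset.map_map, map_univ_equiv, univ_eq_attach, attach_map_val]

/-- Choosing a finite set and an enumeration of it by `ι` amounts to choosing an embedding of
`ι`. -/
noncomputable def sigmaEquivEquivEmbedding (p : Finset β → Prop) :
    (Σ s : {s : Finset β // p s ∧ #s = Fintype.card ι}, ι ≃ s.1) ≃
      {f : ι ↪ β // p (univ.map f)} :=
  Equiv.ofBijective
    (fun q => ⟨q.2.toEmbedding.trans (.subtype (· ∈ q.1.1)), by
      rw [map_univ_toEmbedding_trans_subtype]
      exact q.1.2.1⟩) <| by
    constructor
    · rintro ⟨⟨s, hs⟩, e⟩ ⟨⟨t, ht⟩, e'⟩ h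
      have hf := congr_arg Subtype.val h
      obtain rfl : s = t := by
        rw [← map_univ_toEmbedding_trans_subtype (s := s) e,
          ← map_univ_toEmbedding_trans_subtype (s := t) e']
        exact congr_arg univ.map hf
      obtain rfl : e = e' := Equiv.ext fun j => Subtype.ext (DFunLike.congr_fun hf j)
      rfl
    · rintro ⟨f, hf⟩
      exact ⟨⟨⟨univ.map f, hf, card_map f⟩,
        (Equiv.subtypeUnivEquiv mem_univ).symm.trans (equivMap f univ)⟩, rfl⟩

lemma card_embedding_map_univ (p : Finset β → Prop) :
    Nat.card {f : ι ↪ β // p (univ.map f)} =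
      (Fintype.card ι).factorial * Nat.card {s : Finset β // p s ∧ #s = Fintype.card ι} := by
  have e (s : {s : Finset β // p s ∧ #s = Fintype.card ι}) : (ι ≃ s.1) ≃ Equiv.Perm ι :=
    Equiv.equivCongr (.refl ι) (Fintype.equivOfCardEq (by simp [s.2.2]))
  rw [← Nat.card_congr (sigmaEquivEquivEmbedding p), Nat.card_congr (Equiv.sigmaCongrRight e),
    Nat.card_congr (Equiv.sigmaEquivProd _ _), Nat.card_prod, Nat.card_perm,
    Nat.card_eq_fintype_card (α := ι), mul_comm]

end Counting

lemma Bnn_eq_card_of_two_le {n : ℕ} (hn : 2 ≤ n) :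
    Bnn n = Nat.card {B : Finset (Finset (Fin n)) // IsMinimalBalancedCollection B ∧ #B = n} := by
  refine Nat.card_congr (Equiv.subtypeEquivRight fun B => and_congr_right fun _ =>
    and_iff_right_of_imp ?_)
  rintro hcard rfl
  simp only [card_singleton] at hcard
  omega

lemma Mcard_eq_card_injective_mulVec (n : ℕ) :
    Mcard n = Nat.card {A : Matrix (Fin n) (Fin n) ℝ // (∀ i j, A i j = 0 ∨ A i j = 1) ∧
      Function.Injective A.mulVec ∧ ∃ x : Fin n → ℝ, (∀ j, 0 < x j) ∧ A *ᵥ x = 1} := by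
  simp only [Mcard, isUnit_and_inv_mulVec_pos_iff]

-- For `m = 1` the left-hand side also counts the collection `{N}`, which `B_n^m` excludes.
theorem factorial_mul_Bnn_eq_Mcard_general (n m : ℕ) :
    m.factorial * Nat.card {B : Finset (Finset (Fin n)) // IsMinimalBalancedCollection B ∧ #B = m} =
      Nat.card {A : Matrix (Fin n) (Fin m) ℝ // (∀ i j, A i j = 0 ∨ A i j = 1) ∧
        Function.Injective A.mulVec ∧ ∃ x : Fin m → ℝ, (∀ j, 0 < x j) ∧ A *ᵥ x = 1} := by
  have hcard := card_embedding_map_univ (ι := Fin m) (IsMinimalBalancedCollection (n := n))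
  rw [Fintype.card_fin] at hcard
  rw [← hcard]
  refine Nat.card_congr (Equiv.ofBijective (fun S => ⟨incidenceMatrix ℝ S.1,
    exists_incidenceMatrix_eq_iff.1 ⟨_, rfl⟩, isMinimalBalancedCollection_map_univ_iff.1 S.2⟩)
    ⟨fun S T h => ?_, ?_⟩)
  · exact Subtype.ext (DFunLike.coe_injective (incidenceMatrix_injective (congr_arg Subtype.val h)))
  · rintro ⟨A, hA01, hA⟩
    obtain ⟨S, rfl⟩ := exists_incidenceMatrix_eq_iff.2 hA01
    exact ⟨⟨⟨S, injective_of_injective_incidenceMatrix_mulVec hA.1⟩,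
      isMinimalBalancedCollection_map_univ_iff.2 hA⟩, rfl⟩

/-- For every `n ≥ 2`, `n! · B_n^n = M_n`. -/
theorem factorial_mul_Bnn_eq_Mcard (n : ℕ) (hn : 2 ≤ n) :
    n.factorial * Bnn n = Mcard n := by
  rw [Bnn_eq_card_of_two_le hn, Mcard_eq_card_injective_mulVec,
    factorial_mul_Bnn_eq_Mcard_general]
end
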